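/- Let a < b be real numbers, Z a topological space, Y ⊆ Z × [a,b] a subspace with increasing fibers, and p : Y → [a,b] the restriction of the projection. Let γ be a relative path and write γ(0) = (z₀, a). Then the map s : [a,b] → Y defined by s(c) = (z₀, c) is a well-defined continuous section of p, and γ is homotopic through relative paths to s ∘ ℓ. -/

import Mathlib

open Set unitInterval

/-- The affine homeomorphism `[0,1] → [a,b]`, `u ↦ a + u (b - a)`. -/
noncomputable def ell (a b : ℝ) (hab : a ≤ b) : I → Set.Icc a b :=
  fun u => ⟨a + (u : ℝ) * (b - a), by
    constructor
    · nlinarith [u.2.1, u.2.2]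
    · nlinarith [u.2.1, u.2.2]⟩

/-!
In a topological join-semilattice with `⊥` and `⊤`, any two paths `f` and `g` from `⊥` to `⊤` are
homotopic through such paths: `f ⊔ g (t * ·)` deforms `f` into `f ⊔ g`, and symmetrically for `g`.
Increasing fibers allow this to be done in `Y`, since a point `(z, d)` of `Y` can be raised to
`(z, d ⊔ c)` for every `c`. Raising `γ` by `ℓ (t * ·)` deforms `γ` into `γ` raised by `ℓ`;
contracting `γ` to `γ 0`, while still raising by `ℓ`, then yields the constant section over `γ 0`
composed with `ℓ`. The end stays over `⊤` in the first deformation because `γ 1` lies over `⊤`, in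
the second because `ℓ 1 = ⊤`.
-/

/-- `Y ⊆ Z × C` has increasing fibers: the fiber of `Y` over each point of `Z` is upward closed.
It is stated for any ordered base `C` in place of the interval `[a,b]`. -/
def HasIncreasingFibers {Z C : Type*} [LE C] (Y : Set (Z × C)) : Prop :=
  ∀ (z : Z) (c c' : C), (z, c) ∈ Y → c ≤ c' → (z, c') ∈ Y

/-- A relative path in `Y ⊆ Z × C`: one that starts over the bottom and ends over the top of `C`.
It is a predicate on continuous maps, so that homotopies through relative paths are those of
`ContinuousMap.HomotopicWith`. -/
def IsRelativePath {Z C : Type*} [TopologicalSpace Z] [TopologicalSpace C] [Bot C] [Top C]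
    {Y : Set (Z × C)} (γ : C(I, Y)) : Prop :=
  (γ 0).1.2 = ⊥ ∧ (γ 1).1.2 = ⊤

namespace HasIncreasingFibers

variable {Z C : Type*} [TopologicalSpace Z] [TopologicalSpace C] [SemilatticeSup C]
  [ContinuousSup C] {Y : Set (Z × C)}

/-- Raising points of `Y`: the map `((z, d), c) ↦ (z, d ⊔ c)`, which stays in `Y` because the
fibers are increasing. The join makes it defined for all `c`, not only for `d ≤ c`. -/
def raise (hY : HasIncreasingFibers Y) : C(Y × C, Y) where
  toFun q := ⟨(q.1.1.1, q.1.1.2 ⊔ q.2), hY _ _ _ q.1.2 le_sup_left⟩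

@[simp]
lemma coe_raise (hY : HasIncreasingFibers Y) (y : Y) (c : C) :
    (hY.raise (y, c)).1 = (y.1.1, y.1.2 ⊔ c) :=
  rfl

lemma raise_bot [OrderBot C] (hY : HasIncreasingFibers Y) (y : Y) : hY.raise (y, ⊥) = y :=
  Subtype.ext (by simp)

lemma coe_raise_of_eq_bot [OrderBot C] (hY : HasIncreasingFibers Y) {y : Y} (hy : y.1.2 = ⊥)
    (c : C) : (hY.raise (y, c)).1 = (y.1.1, c) := by
  simp [hy]

variable [BoundedOrder C]

lemma homotopicWith_raise (hY : HasIncreasingFibers Y) {γ : C(I, Y)} (hγ : IsRelativePath γ)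
    {ℓ : C(I, C)} (hℓ0 : ℓ 0 = ⊥) :
    γ.HomotopicWith (hY.raise.comp (γ.prodMk ℓ)) IsRelativePath :=
  ⟨{ toFun q := hY.raise (γ q.2, ℓ (q.1 * q.2))
     map_zero_left u := by simp [hℓ0, hY.raise_bot]
     map_one_left u := by simp
     prop' t := by simp [IsRelativePath, hγ.1, hγ.2, hℓ0] }⟩

lemma homotopicWith_raise_const (hY : HasIncreasingFibers Y) {γ : C(I, Y)} (hγ0 : (γ 0).1.2 = ⊥)
    {ℓ : C(I, C)} (hℓ0 : ℓ 0 = ⊥) (hℓ1 : ℓ 1 = ⊤) :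
    (hY.raise.comp (γ.prodMk ℓ)).HomotopicWith
      (hY.raise.comp ((ContinuousMap.const I (γ 0)).prodMk ℓ)) IsRelativePath :=
  ⟨{ toFun q := hY.raise (γ (σ q.1 * q.2), ℓ q.2)
     map_zero_left u := by simp
     map_one_left u := by simp
     prop' t := by simp [IsRelativePath, hγ0, hℓ0, hℓ1] }⟩

end HasIncreasingFibers

lemma continuous_ell {a b : ℝ} (hab : a ≤ b) : Continuous (ell a b hab) := by
  unfold ell
  fun_prop

lemma ell_zero {a b : ℝ} [hab : Fact (a ≤ b)] : ell a b hab.out 0 = ⊥ :=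
  Subtype.ext (by simp [ell])

lemma ell_one {a b : ℝ} [hab : Fact (a ≤ b)] : ell a b hab.out 1 = ⊤ :=
  Subtype.ext (by simp [ell])

theorem stmt5_general {Z C : Type*} [TopologicalSpace Z] [TopologicalSpace C] [SemilatticeSup C]
    [ContinuousSup C] [BoundedOrder C] {Y : Set (Z × C)} (hY : HasIncreasingFibers Y)
    {γ : I → Y} (hγ : Continuous γ) (hγ0 : (γ 0).1.2 = ⊥) (hγ1 : (γ 1).1.2 = ⊤)
    {ℓ : I → C} (hℓ : Continuous ℓ) (hℓ0 : ℓ 0 = ⊥) (hℓ1 : ℓ 1 = ⊤) :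
    ∃ s : C → Y, Continuous s ∧
      (∀ c, (s c).1 = ((γ 0).1.1, c)) ∧
      (∀ c, (s c).1.2 = c) ∧
      ∃ H : I × I → Y, Continuous H ∧
        (∀ u, H (u, 0) = γ u) ∧
        (∀ u, H (u, 1) = s (ℓ u)) ∧
        (∀ t, (H (0, t)).1.2 = ⊥) ∧
        (∀ t, (H (1, t)).1.2 = ⊤) := by
  lift γ to C(I, Y) using hγ
  lift ℓ to C(I, C) using hℓ
  have hs := hY.coe_raise_of_eq_bot hγ0
  obtain ⟨F⟩ := (hY.homotopicWith_raise ⟨hγ0, hγ1⟩ hℓ0).trans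
    (hY.homotopicWith_raise_const hγ0 hℓ0 hℓ1)
  exact ⟨fun c => hY.raise (γ 0, c), by fun_prop, hs, fun c => congrArg Prod.snd (hs c),
    F ∘ Prod.swap, F.continuous.comp continuous_swap, F.apply_zero, F.apply_one,
    fun t => (F.prop t).1, fun t => (F.prop t).2⟩

/-- For a subspace `Y ⊆ Z × [a,b]` with increasing fibers and `p : Y → [a,b]` the
projection, every relative path `γ` with `γ 0 = (z₀, a)` gives rise to the constant
section `s c = (z₀, c)`, which is well defined and continuous, and `γ` is homotopic
through relative paths to `s ∘ ℓ`. -/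
theorem stmt5 {Z : Type*} [TopologicalSpace Z] (a b : ℝ) (hab : a < b)
    (Y : Set (Z × Set.Icc a b))
    (hY : ∀ (z : Z) (c c' : Set.Icc a b), (z, c) ∈ Y → c ≤ c' → (z, c') ∈ Y)
    (γ : I → Y) (hγ : Continuous γ)
    (hγ0 : ((γ 0).1.2 : ℝ) = a) (hγ1 : ((γ 1).1.2 : ℝ) = b) :
    ∃ s : Set.Icc a b → Y, Continuous s ∧
      (∀ c, (s c).1 = ((γ 0).1.1, c)) ∧
      (∀ c, (s c).1.2 = c) ∧
      ∃ H : I × I → Y, Continuous H ∧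
        (∀ u, H (u, 0) = γ u) ∧
        (∀ u, H (u, 1) = s (ell a b hab.le u)) ∧
        (∀ t, ((H (0, t)).1.2 : ℝ) = a) ∧
        (∀ t, ((H (1, t)).1.2 : ℝ) = b) := by
  have : Fact (a ≤ b) := ⟨hab.le⟩
  simpa only [Subtype.ext_iff (p := (· ∈ Icc a b)), Icc.coe_bot, Icc.coe_top] using
    stmt5_general hY hγ (Subtype.ext hγ0) (Subtype.ext hγ1) (continuous_ell hab.le) ell_zero ell_one
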